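/- arXiv:1712.04016 — 4 statements merged into one kernel-verified Lean document; each statement's English description precedes it below -/
import Mathlib

section
/- Let k be a field and 𝓠 = k[X, Y, Z] the polynomial ring in three variables, and let 𝓘 = (X³, X²Y + YZ², X²Z + XYZ, XY² + XYZ, XZ², Y³, Y²Z, Z³). Then the colon ideal (X³, Y³, Z³) : 𝓘 equals the ideal (X³, X²Y − YZ², XYZ − XZ² − Y²Z, Y³, Z³). -/
open MvPolynomial

section helpers
variable {k : Type*} [Field k]

theorem nf {B : Type*} [CommRing B] (i : k →+* B) (v : Fin 3 → B) (x y z : B)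
    (h0 : v 0 = x) (h1 : v 1 = y) (h2 : v 2 = z)
    (hx : x^3 = 0) (hy : y^3 = 0) (hz : z^3 = 0) (hf : x^2*y = y*z^2)
    (hg : x*y*z = x*z^2 + y^2*z) (f : MvPolynomial (Fin 3) k) :
    ∃ a0 a1 a2 a3 a4 a5 a6 a7 a8 a9 b1 b2 b3 b4 b5 : k, eval₂ i v f = i a0 + i a1 * (x) + i a2 * (y) + i a3 * (z) + i a4 * (x^2) + i a5 * (x*y) + i a6 * (x*z) + i a7 * (y^2) + i a8 * (y*z) + i a9 * (z^2) + i b1 * (x^2*z) + i b2 * (x*y^2) + i b3 * (x*z^2) + i b4 * (y^2*z) + i b5 * (y*z^2) := by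
  have m1 : x*y*z^2 = 0 := by linear_combination (-x) * hf + y * hx
  have m2 : y^2*z^2 = 0 := by linear_combination m1 - z * hg - x * hz
  have m3 : x^2*y^2 = 0 := by linear_combination y * hf + m2
  have m4 : x^2*y*z = 0 := by linear_combination z * hf + y * hz
  have m5 : x*y^2*z = 0 := by linear_combination y * hg + m1 + z * hy
  have m6 : x^2*z^2 = 0 := by linear_combination (-x) * hg + m4 - m5
  induction f using MvPolynomial.induction_on with
  | C a => exact ⟨a,0,0,0,0,0,0,0,0,0,0,0,0,0,0, by simp⟩
  | add p q hp hq =>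
    obtain ⟨a0, a1, a2, a3, a4, a5, a6, a7, a8, a9, b1, b2, b3, b4, b5, hp⟩ := hp
    obtain ⟨q0, q1, q2, q3, q4, q5, q6, q7, q8, q9, q10, q11, q12, q13, q14, hq⟩ := hq
    refine ⟨a0+q0, a1+q1, a2+q2, a3+q3, a4+q4, a5+q5, a6+q6, a7+q7, a8+q8, a9+q9, b1+q10, b2+q11, b3+q12, b4+q13, b5+q14, ?_⟩
    rw [eval₂_add, hp, hq]
    simp only [map_add]
    ring
  | mul_X p n hp =>
    obtain ⟨a0, a1, a2, a3, a4, a5, a6, a7, a8, a9, b1, b2, b3, b4, b5, hp⟩ := hp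
    rw [eval₂_mul, eval₂_X, hp]
    fin_cases n
    · refine ⟨0, a0, 0, 0, a1, a2, a3, 0, 0, 0, a6, a7, a9 + a8, a8, a5, ?_⟩
      simp only [Fin.zero_eta, h0, map_add, map_zero]
      linear_combination (i a4) * hx + (i a5) * hf + (i a8) * hg + z * (i b1) * hx + (i b2) * m3 + (i b3) * m6 + (i b4) * m5 + (i b5) * m1
    · refine ⟨0, 0, a0, 0, 0, a1, 0, a2, a3, 0, 0, a5, a6, a6 + a8, a4 + a9, ?_⟩
      simp only [Fin.mk_one, h1, map_add, map_zero]
      linear_combination (i a7) * hy + (i a4) * hf + (i a6) * hg + (i b1) * m4 + x * (i b2) * hy + (i b3) * m1 + z * (i b4) * hy + (i b5) * m2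
    · refine ⟨0, 0, 0, a0, 0, 0, a1, 0, a2, a3, a4, 0, a6 + a5, a5 + a7, a8, ?_⟩
      simp only [Fin.reduceFinMk, h2, map_add, map_zero]
      linear_combination (i a9) * hz + (i a5) * hg + (i b1) * m6 + (i b2) * m5 + x * (i b3) * hz + (i b4) * m2 + y * (i b5) * hz

theorem ext0 {A : Type*} [CommRing A] (i : k →+* A) (x y z : A)
    (hx : x^3 = 0) (hy : y^3 = 0) (hz : z^3 = 0)
    (hn : ∀ c : k, i c * (x^2*y^2*z^2) = 0 → c = 0) (a0 a1 a2 a3 a4 a5 a6 a7 a8 a9 b1 b2 b3 b4 b5 : k) (r : A)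
    (hr : r = i a0 + i a1 * (x) + i a2 * (y) + i a3 * (z) + i a4 * (x^2) + i a5 * (x*y) + i a6 * (x*z) + i a7 * (y^2) + i a8 * (y*z) + i a9 * (z^2) + i b1 * (x^2*z) + i b2 * (x*y^2) + i b3 * (x*z^2) + i b4 * (y^2*z) + i b5 * (y*z^2))
    (e1 : r * (x^2*y+y*z^2) = 0) (e2 : r * (x^2*z+x*y*z) = 0) (e3 : r * (x*y^2+x*y*z) = 0)
    (e4 : r * (x*z^2) = 0) (e5 : r * (y^2*z) = 0) : r = 0 := by
  have ka0 : a0 = 0 := by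
    apply hn
    rw [hr] at e5
    linear_combination x*z*e5*x - ((1)*i a1*x^0*y^2*z^2 + (1)*i a4*x^1*y^2*z^2 + (1)*i a5*x^0*y^3*z^2 + (1)*i a6*x^0*y^2*z^3 + (1)*i b1*x^1*y^2*z^3 + (1)*i b2*x^0*y^4*z^2 + (1)*i b3*x^0*y^2*z^4) * hx - ((1)*i a2*x^2*y^0*z^2 + (1)*i a7*x^2*y^1*z^2 + (1)*i a8*x^2*y^0*z^3 + (1)*i b4*x^2*y^1*z^3 + (1)*i b5*x^2*y^0*z^4) * hy - ((1)*i a3*x^2*y^2*z^0 + (1)*i a9*x^2*y^2*z^1) * hz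
  have ka1 : a1 = 0 := by
    apply hn
    rw [hr] at e5
    simp only [ka0, map_zero] at e5
    linear_combination x*z*e5 - ((1)*i a4*x^0*y^2*z^2 + (1)*i b1*x^0*y^2*z^3) * hx - ((1)*i a2*x^1*y^0*z^2 + (1)*i a5*x^2*y^0*z^2 + (1)*i a7*x^1*y^1*z^2 + (1)*i a8*x^1*y^0*z^3 + (1)*i b2*x^2*y^1*z^2 + (1)*i b4*x^1*y^1*z^3 + (1)*i b5*x^1*y^0*z^4) * hy - ((1)*i a3*x^1*y^2*z^0 + (1)*i a6*x^2*y^2*z^0 + (1)*i a9*x^1*y^2*z^1 + (1)*i b3*x^2*y^2*z^1) * hz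
  have ka2 : a2 = 0 := by
    apply hn
    rw [hr] at e4
    simp only [ka0, ka1, map_zero] at e4
    linear_combination x*y*e4 - ((1)*i a4*x^1*y^1*z^2 + (1)*i a5*x^0*y^2*z^2 + (1)*i a6*x^0*y^1*z^3 + (1)*i b1*x^1*y^1*z^3 + (1)*i b2*x^0*y^3*z^2 + (1)*i b3*x^0*y^1*z^4) * hx - ((1)*i a7*x^2*y^0*z^2 + (1)*i b4*x^2*y^0*z^3) * hy - ((1)*i a3*x^2*y^1*z^0 + (1)*i a8*x^2*y^2*z^0 + (1)*i a9*x^2*y^1*z^1 + (1)*i b5*x^2*y^2*z^1) * hz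
  have ka3 : a3 = 0 := by
    apply hn
    rw [hr] at e5
    simp only [ka0, ka1, ka2, map_zero] at e5
    linear_combination x^2*e5 - ((1)*i a4*x^1*y^2*z^1 + (1)*i a5*x^0*y^3*z^1 + (1)*i a6*x^0*y^2*z^2 + (1)*i b1*x^1*y^2*z^2 + (1)*i b2*x^0*y^4*z^1 + (1)*i b3*x^0*y^2*z^3) * hx - ((1)*i a7*x^2*y^1*z^1 + (1)*i a8*x^2*y^0*z^2 + (1)*i b4*x^2*y^1*z^2 + (1)*i b5*x^2*y^0*z^3) * hy - ((1)*i a9*x^2*y^2*z^0) * hz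
  have ka4 : a4 = 0 := by
    apply hn
    rw [hr] at e5
    simp only [ka0, ka1, ka2, ka3, map_zero] at e5
    linear_combination z*e5 - (0) * hx - ((1)*i a5*x^1*y^0*z^2 + (1)*i a7*x^0*y^1*z^2 + (1)*i a8*x^0*y^0*z^3 + (1)*i b2*x^1*y^1*z^2 + (1)*i b4*x^0*y^1*z^3 + (1)*i b5*x^0*y^0*z^4) * hy - ((1)*i a6*x^1*y^2*z^0 + (1)*i a9*x^0*y^2*z^1 + (1)*i b1*x^2*y^2*z^0 + (1)*i b3*x^1*y^2*z^1) * hz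
  have ka5 : a5 = 0 := by
    apply hn
    rw [hr] at e1
    simp only [ka0, ka1, ka2, ka3, ka4, map_zero] at e1
    linear_combination x*e1 - ((1)*i a5*x^1*y^2*z^0 + (1)*i a6*x^1*y^1*z^1 + (1)*i a7*x^0*y^3*z^0 + (1)*i a8*x^0*y^2*z^1 + (1)*i a9*x^0*y^1*z^2 + (1)*i b1*x^2*y^1*z^1 + (1)*i b1*x^0*y^1*z^3 + (1)*i b2*x^1*y^3*z^0 + (1)*i b3*x^1*y^1*z^2 + (1)*i b4*x^0*y^3*z^1 + (1)*i b5*x^0*y^2*z^2) * hx - ((1)*i a7*x^1*y^0*z^2 + (1)*i b2*x^2*y^0*z^2 + (1)*i b4*x^1*y^0*z^3) * hy - ((1)*i a6*x^2*y^1*z^0 + (1)*i a8*x^1*y^2*z^0 + (1)*i a9*x^1*y^1*z^1 + (1)*i b3*x^2*y^1*z^1 + (1)*i b5*x^1*y^2*z^1) * hz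
  have ka6 : a6 = 0 := by
    apply hn
    rw [hr] at e5
    simp only [ka0, ka1, ka2, ka3, ka4, ka5, map_zero] at e5
    linear_combination x*e5 - ((1)*i b1*x^0*y^2*z^2) * hx - ((1)*i a7*x^1*y^1*z^1 + (1)*i a8*x^1*y^0*z^2 + (1)*i b2*x^2*y^1*z^1 + (1)*i b4*x^1*y^1*z^2 + (1)*i b5*x^1*y^0*z^3) * hy - ((1)*i a9*x^1*y^2*z^0 + (1)*i b3*x^2*y^2*z^0) * hz
  have ka7 : a7 = 0 := by
    apply hn
    rw [hr] at e4
    simp only [ka0, ka1, ka2, ka3, ka4, ka5, ka6, map_zero] at e4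
    linear_combination x*e4 - ((1)*i b1*x^1*y^0*z^3 + (1)*i b2*x^0*y^2*z^2 + (1)*i b3*x^0*y^0*z^4) * hx - (0) * hy - ((1)*i a8*x^2*y^1*z^0 + (1)*i a9*x^2*y^0*z^1 + (1)*i b4*x^2*y^2*z^0 + (1)*i b5*x^2*y^1*z^1) * hz
  have ka8 : a8 = 0 := by
    apply hn
    rw [hr] at e1
    simp only [ka0, ka1, ka2, ka3, ka4, ka5, ka6, ka7, map_zero] at e1
    linear_combination z*e1 - ((1)*i b1*x^1*y^1*z^2 + (1)*i b2*x^0*y^3*z^1 + (1)*i b3*x^0*y^1*z^3) * hx - ((1)*i b2*x^1*y^0*z^3 + (1)*i b4*x^2*y^0*z^2 + (1)*i b4*x^0*y^0*z^4) * hy - ((1)*i a8*x^0*y^2*z^1 + (1)*i a9*x^2*y^1*z^0 + (1)*i a9*x^0*y^1*z^2 + (1)*i b1*x^2*y^1*z^1 + (1)*i b3*x^1*y^1*z^2 + (1)*i b5*x^2*y^2*z^0 + (1)*i b5*x^0*y^2*z^2) * hz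
  have ka9 : a9 = 0 := by
    apply hn
    rw [hr] at e1 e3
    simp only [ka0, ka1, ka2, ka3, ka4, ka5, ka6, ka7, ka8, map_zero] at e1 e3
    linear_combination (x*e3 - z*e1) - ((1)*i b1*x^1*y^2*z^1 + (1)*i b2*x^0*y^4*z^0 + (1)*i b3*x^0*y^2*z^2) * hx - ((-1)*i b2*x^1*y^0*z^3 + (1)*i b4*x^2*y^1*z^1 + (-1)*i b4*x^0*y^0*z^4 + (1)*i b5*x^2*y^0*z^2) * hy - ((-1)*i a9*x^0*y^1*z^2 + (-1)*i b1*x^2*y^1*z^1 + (-1)*i b3*x^1*y^1*z^2 + (-1)*i b5*x^0*y^2*z^2) * hz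
  have kb1 : b1 = 0 := by
    apply hn
    rw [hr] at e5
    simp only [ka0, ka1, ka2, ka3, ka4, ka5, ka6, ka7, ka8, ka9, map_zero] at e5
    linear_combination e5 - (0) * hx - ((1)*i b2*x^1*y^1*z^1 + (1)*i b4*x^0*y^1*z^2 + (1)*i b5*x^0*y^0*z^3) * hy - ((1)*i b3*x^1*y^2*z^0) * hz
  have kb2 : b2 = 0 := by
    apply hn
    rw [hr] at e4
    simp only [ka0, ka1, ka2, ka3, ka4, ka5, ka6, ka7, ka8, ka9, kb1, map_zero] at e4
    linear_combination e4 - (0) * hx - (0) * hy - ((1)*i b3*x^2*y^0*z^1 + (1)*i b4*x^1*y^2*z^0 + (1)*i b5*x^1*y^1*z^1) * hz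
  have kb5 : b5 = 0 := by
    apply hn
    rw [hr] at e1
    simp only [ka0, ka1, ka2, ka3, ka4, ka5, ka6, ka7, ka8, ka9, kb1, kb2, map_zero] at e1
    linear_combination e1 - ((1)*i b3*x^0*y^1*z^2) * hx - ((1)*i b4*x^2*y^0*z^1 + (1)*i b4*x^0*y^0*z^3) * hy - ((1)*i b3*x^1*y^1*z^1 + (1)*i b5*x^0*y^2*z^1) * hz
  have kb4 : b4 = 0 := by
    apply hn
    rw [hr] at e2
    simp only [ka0, ka1, ka2, ka3, ka4, ka5, ka6, ka7, ka8, ka9, kb1, kb2, kb5, map_zero] at e2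
    linear_combination e2 - ((1)*i b3*x^0*y^0*z^3) * hx - ((1)*i b4*x^1*y^0*z^2) * hy - ((1)*i b3*x^2*y^1*z^0) * hz
  have kb3 : b3 = 0 := by
    apply hn
    rw [hr] at e3
    simp only [ka0, ka1, ka2, ka3, ka4, ka5, ka6, ka7, ka8, ka9, kb1, kb2, kb5, kb4, map_zero] at e3
    linear_combination e3 - (0) * hx - (0) * hy - ((1)*i b3*x^2*y^1*z^0) * hz
  simp [hr, ka0, ka1, ka2, ka3, ka4, ka5, ka6, ka7, ka8, ka9, kb1, kb2, kb3, kb4, kb5]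

theorem mul0 {A : Type*} [CommRing A] (x y z : A)
    (hx : x^3 = 0) (hy : y^3 = 0) (hz : z^3 = 0) (F G : A)
    (hF : F = x^3 ∨ F = x^2*y - y*z^2 ∨ F = x*y*z - x*z^2 - y^2*z ∨ F = y^3 ∨ F = z^3)
    (hG : G = x^3 ∨ G = x^2*y + y*z^2 ∨ G = x^2*z + x*y*z ∨ G = x*y^2 + x*y*z ∨ G = x*z^2 ∨
      G = y^3 ∨ G = y^2*z ∨ G = z^3) : G * F = 0 := by
  rcases hF with rfl | rfl | rfl | rfl | rfl <;>
  rcases hG with rfl | rfl | rfl | rfl | rfl | rfl | rfl | rfl <;> grind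

theorem top0 (c : k) (h : C c * (X 0 ^ 2 * X 1 ^ 2 * X 2 ^ 2) ∈
    Ideal.span {(X 0 : MvPolynomial (Fin 3) k) ^ 3, X 1 ^ 3, X 2 ^ 3}) : c = 0 := by
  have hs : ({(X 0 : MvPolynomial (Fin 3) k) ^ 3, X 1 ^ 3, X 2 ^ 3} : Set _) =
      (fun s => monomial s (1 : k)) '' {Finsupp.single 0 3, Finsupp.single 1 3, Finsupp.single 2 3} := by
    simp [Set.image_insert_eq, X_pow_eq_monomial]
  rw [hs, mem_ideal_span_monomial_image] at h
  have hm : C c * (X 0 ^ 2 * X 1 ^ 2 * X 2 ^ 2) =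
      monomial (Finsupp.single 0 2 + Finsupp.single 1 2 + Finsupp.single 2 2 : Fin 3 →₀ ℕ) c := by
    simp [X_pow_eq_monomial, monomial_mul, C_mul_monomial]
  by_contra hc
  obtain ⟨s, hs, hle⟩ := h (Finsupp.single 0 2 + Finsupp.single 1 2 + Finsupp.single 2 2) (by
    rw [hm, mem_support_iff, coeff_monomial, if_pos rfl]; exact hc)
  rcases hs with rfl | rfl | rfl
  · have := hle 0
    simp at this
  · have := hle 1
    simp at this
  · have := hle 2
    simp at this

end helpers

set_option maxHeartbeats 2000000 in
/-- **Example 2.7.** Let `k` be a field, `𝓠 = k[X, Y, Z]`, and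
`𝓘 = (X³, X²Y + YZ², X²Z + XYZ, XY² + XYZ, XZ², Y³, Y²Z, Z³)`.  Then
`(X³, Y³, Z³) : 𝓘 = (X³, X²Y − YZ², XYZ − XZ² − Y²Z, Y³, Z³)`.
Here `X = X 0`, `Y = X 1`, `Z = X 2` in `MvPolynomial (Fin 3) k`. -/
theorem stmt_15 (k : Type*) [Field k]
    (𝓘 : Ideal (MvPolynomial (Fin 3) k))
    (h𝓘 : 𝓘 = Ideal.span {(X 0 : MvPolynomial (Fin 3) k) ^ 3,
      X 0 ^ 2 * X 1 + X 1 * X 2 ^ 2, X 0 ^ 2 * X 2 + X 0 * X 1 * X 2,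
      X 0 * X 1 ^ 2 + X 0 * X 1 * X 2, X 0 * X 2 ^ 2, X 1 ^ 3, X 1 ^ 2 * X 2,
      X 2 ^ 3}) :
    Submodule.colon
        (Ideal.span {(X 0 : MvPolynomial (Fin 3) k) ^ 3, X 1 ^ 3, X 2 ^ 3}) 𝓘 =
      Ideal.span {(X 0 : MvPolynomial (Fin 3) k) ^ 3,
        X 0 ^ 2 * X 1 - X 1 * X 2 ^ 2,
        X 0 * X 1 * X 2 - X 0 * X 2 ^ 2 - X 1 ^ 2 * X 2,
        X 1 ^ 3, X 2 ^ 3} := by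
  subst h𝓘
  set K : Ideal (MvPolynomial (Fin 3) k) := Ideal.span {(X 0 : MvPolynomial (Fin 3) k) ^ 3, X 1 ^ 3, X 2 ^ 3} with hK
  set J : Ideal (MvPolynomial (Fin 3) k) := Ideal.span {(X 0 : MvPolynomial (Fin 3) k) ^ 3,
        X 0 ^ 2 * X 1 - X 1 * X 2 ^ 2,
        X 0 * X 1 * X 2 - X 0 * X 2 ^ 2 - X 1 ^ 2 * X 2,
        X 1 ^ 3, X 2 ^ 3} with hJ
  have kx : (X 0 : MvPolynomial (Fin 3) k) ^ 3 ∈ K := Ideal.subset_span (by simp)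
  have ky : (X 1 : MvPolynomial (Fin 3) k) ^ 3 ∈ K := Ideal.subset_span (by simp)
  have kz : (X 2 : MvPolynomial (Fin 3) k) ^ 3 ∈ K := Ideal.subset_span (by simp)
  have hx : (Ideal.Quotient.mk K (X 0)) ^ 3 = 0 := by
    rw [← map_pow]; exact Ideal.Quotient.eq_zero_iff_mem.2 kx
  have hy : (Ideal.Quotient.mk K (X 1)) ^ 3 = 0 := by
    rw [← map_pow]; exact Ideal.Quotient.eq_zero_iff_mem.2 ky
  have hz : (Ideal.Quotient.mk K (X 2)) ^ 3 = 0 := by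
    rw [← map_pow]; exact Ideal.Quotient.eq_zero_iff_mem.2 kz
  have hJle : J ≤ Submodule.colon K (Ideal.span {(X 0 : MvPolynomial (Fin 3) k) ^ 3,
      X 0 ^ 2 * X 1 + X 1 * X 2 ^ 2, X 0 ^ 2 * X 2 + X 0 * X 1 * X 2,
      X 0 * X 1 ^ 2 + X 0 * X 1 * X 2, X 0 * X 2 ^ 2, X 1 ^ 3, X 1 ^ 2 * X 2,
      X 2 ^ 3} : Ideal (MvPolynomial (Fin 3) k)) := by
    rw [hJ, Ideal.span_le]
    intro f hf
    rw [SetLike.mem_coe, Submodule.mem_colon]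
    intro g hg
    rw [smul_eq_mul, mul_comm, ← smul_eq_mul, ← Submodule.mem_colon_singleton]
    revert g
    change Ideal.span _ ≤ _
    rw [Ideal.span_le]
    intro g hg
    rw [SetLike.mem_coe, Submodule.mem_colon_singleton, smul_eq_mul,
      ← Ideal.Quotient.eq_zero_iff_mem]
    simp only [Set.mem_insert_iff, Set.mem_singleton_iff] at hf hg
    rw [map_mul]
    apply mul0 _ _ _ hx hy hz
    · rcases hf with rfl | rfl | rfl | rfl | rfl <;> simp only [map_mul, map_add, map_sub, map_pow, true_or, or_true]
    · rcases hg with rfl | rfl | rfl | rfl | rfl | rfl | rfl | rfl <;> simp only [map_mul, map_add, map_sub, map_pow, true_or, or_true]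
  apply le_antisymm _ hJle
  intro f hf
  obtain ⟨a0, a1, a2, a3, a4, a5, a6, a7, a8, a9, b1, b2, b3, b4, b5, hr⟩ := nf ((Ideal.Quotient.mk J).comp C) (fun n => Ideal.Quotient.mk J (X n)) _ _ _ rfl rfl rfl
    (by rw [← map_pow]; exact Ideal.Quotient.eq_zero_iff_mem.2 (Ideal.subset_span (by simp)))
    (by rw [← map_pow]; exact Ideal.Quotient.eq_zero_iff_mem.2 (Ideal.subset_span (by simp)))
    (by rw [← map_pow]; exact Ideal.Quotient.eq_zero_iff_mem.2 (Ideal.subset_span (by simp)))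
    (by simp only [← map_pow, ← map_mul]; exact Ideal.Quotient.eq.2 (Ideal.subset_span (by simp)))
    (by simp only [← map_pow, ← map_mul, ← map_add]; refine Ideal.Quotient.eq.2 (Ideal.subset_span ?_)
        rw [← sub_sub]; simp) f
  have hev : eval₂ ((Ideal.Quotient.mk J).comp C) (fun n => Ideal.Quotient.mk J (X n)) f = Ideal.Quotient.mk J f := by
    have := MvPolynomial.eval₂_comp_left (Ideal.Quotient.mk J) (C : k →+* MvPolynomial (Fin 3) k) X f
    rw [MvPolynomial.eval₂_eta] at this
    exact this.symm
  rw [hev] at hr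
  obtain ⟨r, hrd⟩ : ∃ r : MvPolynomial (Fin 3) k, r = C a0 + C a1 * (X 0) + C a2 * (X 1) + C a3 * (X 2) + C a4 * (X 0^2) + C a5 * (X 0*X 1) + C a6 * (X 0*X 2) + C a7 * (X 1^2) + C a8 * (X 1*X 2) + C a9 * (X 2^2) + C b1 * (X 0^2*X 2) + C b2 * (X 0*X 1^2) + C b3 * (X 0*X 2^2) + C b4 * (X 1^2*X 2) + C b5 * (X 1*X 2^2) := ⟨_, rfl⟩
  have hfr : f - r ∈ J := by
    rw [← Ideal.Quotient.eq, hr, hrd]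
    simp
  have hrc := sub_mem hf (hJle hfr)
  rw [sub_sub_cancel, Submodule.mem_colon] at hrc
  have key : ∀ g ∈ ({(X 0 : MvPolynomial (Fin 3) k) ^ 3,
      X 0 ^ 2 * X 1 + X 1 * X 2 ^ 2, X 0 ^ 2 * X 2 + X 0 * X 1 * X 2,
      X 0 * X 1 ^ 2 + X 0 * X 1 * X 2, X 0 * X 2 ^ 2, X 1 ^ 3, X 1 ^ 2 * X 2,
      X 2 ^ 3} : Set (MvPolynomial (Fin 3) k)),
      Ideal.Quotient.mk K r * Ideal.Quotient.mk K g = 0 := by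
    intro g hg
    rw [← map_mul]
    exact Ideal.Quotient.eq_zero_iff_mem.2 (hrc g (Ideal.subset_span hg))
  have hr0 : Ideal.Quotient.mk K r = 0 := by
    refine ext0 ((Ideal.Quotient.mk K).comp C) _ _ _ hx hy hz (fun c hc => top0 c ?_) a0 a1 a2 a3 a4 a5 a6 a7 a8 a9 b1 b2 b3 b4 b5 _ (by rw [hrd]; simp) ?_ ?_ ?_ ?_ ?_
    · rw [← Ideal.Quotient.eq_zero_iff_mem]
      simpa using hc
    · have := key (X 0 ^ 2 * X 1 + X 1 * X 2 ^ 2) (by simp only [Set.mem_insert_iff, true_or, or_true])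
      simpa only [map_mul, map_add, map_pow] using this
    · have := key (X 0 ^ 2 * X 2 + X 0 * X 1 * X 2) (by simp only [Set.mem_insert_iff, true_or, or_true])
      simpa only [map_mul, map_add, map_pow] using this
    · have := key (X 0 * X 1 ^ 2 + X 0 * X 1 * X 2) (by simp only [Set.mem_insert_iff, true_or, or_true])
      simpa only [map_mul, map_add, map_pow] using this
    · have := key (X 0 * X 2 ^ 2) (by simp only [Set.mem_insert_iff, true_or, or_true])
      simpa only [map_mul, map_add, map_pow] using this
    · have := key (X 1 ^ 2 * X 2) (by simp only [Set.mem_insert_iff, true_or, or_true])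
      simpa only [map_mul, map_add, map_pow] using this
  have hrK : r ∈ K := Ideal.Quotient.eq_zero_iff_mem.1 hr0
  have hKJ : K ≤ J := by
    rw [hK, Ideal.span_le]
    rintro g (rfl | rfl | rfl) <;> exact Ideal.subset_span (by simp)
  have := add_mem hfr (hKJ hrK)
  rwa [sub_add_cancel] at this
end

section
/- Define h : ℤ → ℤ by h(i) = (i+1)(i+2)/2 for i ≥ 0 and h(i) = 0 for i < 0. For all integers s and d with d ≥ 3 and 2d < s + 3, setting u = s + 2 − ⌈d/2⌉, one has h(u) − h(u − d) − 6·h(u − s − 3 + d) > 2·h(s − u). -/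
/-- The Hilbert function of the polynomial ring `k[X₁, X₂, X₃]`:
`h i = (i+1)(i+2)/2` for `i ≥ 0` and `h i = 0` for `i < 0`. -/
def h (i : ℤ) : ℤ := if 0 ≤ i then (i + 1) * (i + 2) / 2 else 0

theorem two_h (i : ℤ) (hi : 0 ≤ i) : 2 * h i = (i + 1) * (i + 2) := by
  unfold h
  rw [if_pos hi]
  apply Int.mul_ediv_cancel'
  have := (Int.even_mul_succ_self (i + 1)).two_dvd
  rwa [add_assoc] at this

/-- **Key estimate in Case 1 of Proposition 3.2.** For all integers `s` and `d` with
`d ≥ 3` and `2d < s + 3`, setting `u = s + 2 − ⌈d/2⌉`, one has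
`h(u) − h(u−d) − 6·h(u−s−3+d) > 2·h(s−u)`. -/
theorem stmt_16 (s d : ℤ) (hd : 3 ≤ d) (hsd : 2 * d < s + 3)
    (u : ℤ) (hu : u = s + 2 - ⌈(d : ℚ) / 2⌉) :
    h u - h (u - d) - 6 * h (u - s - 3 + d) > 2 * h (s - u) := by
  obtain ⟨k, hk⟩ := Int.even_or_odd' d
  have hc : (d = 2 * k ∧ u = s + 2 - k) ∨ (d = 2 * k + 1 ∧ u = s + 2 - (k + 1)) := by
    rcases hk with hk | hk
    · left
      refine ⟨hk, ?_⟩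
      rw [hu]
      congr 1
      rw [Int.ceil_eq_iff, hk]
      push_cast
      constructor <;> linarith
    · right
      refine ⟨hk, ?_⟩
      rw [hu]
      congr 1
      rw [Int.ceil_eq_iff, hk]
      push_cast
      constructor <;> linarith
  have h1 := two_h u (by omega)
  have h2 := two_h (u - d) (by omega)
  have h3 := two_h (u - s - 3 + d) (by omega)
  have h4 := two_h (s - u) (by omega)
  suffices 2 * h u - 2 * h (u - d) - 6 * (2 * h (u - s - 3 + d)) > 2 * (2 * h (s - u)) by linarith
  rw [h1, h2, h3, h4]
  clear h1 h2 h3 h4 hu hk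
  rcases hc with ⟨rfl, rfl⟩ | ⟨rfl, rfl⟩
  · obtain ⟨t, rfl⟩ : ∃ t, s = 4 * k - 2 + t := ⟨s - (4 * k - 2), by ring⟩
    have ht : 0 ≤ t := by omega
    have hk : 2 ≤ k := by omega
    nlinarith [mul_nonneg ht (show 0 ≤ k by omega)]
  · obtain ⟨t, rfl⟩ : ∃ t, s = 4 * k + t := ⟨s - (4 * k), by ring⟩
    have ht : 0 ≤ t := by omega
    have hk : 1 ≤ k := by omega
    nlinarith [mul_nonneg ht (show 0 ≤ k by omega)]
end

section
/- Define h : ℤ → ℤ by h(i) = (i+1)(i+2)/2 for i ≥ 0 and h(i) = 0 for i < 0. For all integers s and d with s ≥ 1, s + 3 ≤ 2d, and d ≤ s + 1, setting u = ⌊(s + d)/2⌋, one has h(u) − 7·h(u − d) > 2·h(s − u). -/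
/-- **Key estimate in Case 2 of Proposition 3.2.** For all integers `s` and `d` with
`s ≥ 1`, `s + 3 ≤ 2d`, and `d ≤ s + 1`, setting `u = ⌊(s+d)/2⌋`, one has
`h(u) − 7·h(u−d) > 2·h(s−u)`. -/
theorem stmt_17 (s d : ℤ) (hs : 1 ≤ s) (hsd : s + 3 ≤ 2 * d) (hds : d ≤ s + 1)
    (u : ℤ) (hu : u = ⌊((s : ℚ) + (d : ℚ)) / 2⌋) :
    h u - 7 * h (u - d) > 2 * h (s - u) := by
  have hu1 : 2 * u ≤ s + d := by
    have := Int.floor_le (((s : ℚ) + (d : ℚ)) / 2)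
    rw [← hu] at this
    have h2 : (2 : ℚ) * u ≤ s + d := by linarith
    exact_mod_cast h2
  have hu2 : s + d < 2 * u + 2 := by
    have := Int.lt_floor_add_one (((s : ℚ) + (d : ℚ)) / 2)
    rw [← hu] at this
    have h2 : (s : ℚ) + d < 2 * u + 2 := by linarith
    exact_mod_cast h2
  clear hu
  have e1 := two_h u (by omega)
  have e2 := two_h (s - u) (by omega)
  by_cases ha : 0 ≤ u - d
  · have e3 := two_h (u - d) ha
    obtain ⟨a, rfl⟩ : ∃ a, u = d + a := ⟨u - d, by ring⟩
    have ha' : 0 ≤ a := by omega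
    rw [show d + a - d = a by ring] at *
    rcases (by omega : s = d + 2 * a ∨ s = d + 2 * a + 1) with rfl | rfl
    · rw [show d + 2 * a - (d + a) = a by ring] at *
      have : (3 * a + 4) * (3 * a + 5) ≤ (d + a + 1) * (d + a + 2) := by
        apply mul_le_mul <;> omega
      nlinarith
    · rw [show d + 2 * a + 1 - (d + a) = a + 1 by ring] at *
      have : (3 * a + 5) * (3 * a + 6) ≤ (d + a + 1) * (d + a + 2) := by
        apply mul_le_mul <;> omega
      nlinarith
  · have e3 : h (u - d) = 0 := by rw [h, if_neg ha]
    have : s - u = 0 := by omega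
    rw [this] at e2 ⊢
    have : 2 * 3 ≤ (u + 1) * (u + 2) := by
      apply mul_le_mul <;> omega
    omega
end

section
/- Define h : ℤ → ℤ by h(i) = (i+1)(i+2)/2 for i ≥ 0 and h(i) = 0 for i < 0. For all integers s and d with d ≥ 3 and 2d ≤ s + 3, setting u = s + 2 − ⌈d/2⌉, one has h(u) − h(u − d) − 4·h(u − s − 3 + d) > 4·h(s − u). -/
/-- **Key estimate in Case 1 of Proposition 3.3.** For all integers `s` and `d` with
`d ≥ 3` and `2d ≤ s + 3`, setting `u = s + 2 − ⌈d/2⌉`, one has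
`h(u) − h(u−d) − 4·h(u−s−3+d) > 4·h(s−u)`. -/
theorem stmt_18 (s d : ℤ) (hd : 3 ≤ d) (hsd : 2 * d ≤ s + 3)
    (u : ℤ) (hu : u = s + 2 - ⌈(d : ℚ) / 2⌉) :
    h u - h (u - d) - 4 * h (u - s - 3 + d) > 4 * h (s - u) := by
  obtain ⟨c, hc⟩ : ∃ c : ℤ, c = ⌈(d : ℚ) / 2⌉ := ⟨_, rfl⟩
  have h1 : d ≤ 2 * c := by
    have := Int.le_ceil ((d : ℚ) / 2)
    rw [← hc] at this
    have h' : (d : ℚ) ≤ 2 * c := by linarith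
    exact_mod_cast h'
  have h2 : 2 * c < d + 2 := by
    have := Int.ceil_lt_add_one ((d : ℚ) / 2)
    rw [← hc] at this
    have h' : (2 * c : ℚ) < d + 2 := by linarith
    exact_mod_cast h'
  rw [← hc] at hu
  clear hc
  have e1 := two_h u (by omega)
  have e2 := two_h (u - d) (by omega)
  have e3 := two_h (u - s - 3 + d) (by omega)
  have e4 := two_h (s - u) (by omega)
  have hs : s = u + c - 2 := by omega
  have key : d * (2 * u) ≥ d * (2 * (2 * d - 1 - c)) :=
    mul_le_mul_of_nonneg_left (by omega) (by omega)
  subst hs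
  have hcase : d = 2 * c ∨ d = 2 * c - 1 := by omega
  rcases hcase with rfl | rfl <;> nlinarith
end
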